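/- Let 𝒩 be a network architecture whose buffer structure satisfies the buffer axioms B1–B8 (unmatched-send elimination, lifted axiom B5). If w₁ · (p▷q!v) · u is 𝒩-channel-compliant and the event p▷q?v does not occur in u, then w₁ · u is 𝒩-channel-compliant. -/

import Mathlib

/-!
Channels do not interact: a word runs from a channel state `ξ` iff, for every channel `c`, the
sequence of buffer operations that the word performs on `c` is defined on `ξ c`
(`NetArch.runFrom_isSome_iff`). Let `ξ` be the state reached after `w₁`. Sending `(p, q, v)` changes
only the channel `N.chan p q`, so on every other channel the operations of `u` see the same buffer
with or without the send. On `N.chan p q` the operations of `u` contain no removal of `(p, q, v)`,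
because `u` contains no such receive event, and axiom B5 deletes the insertion.
-/

/-- Operations on a buffer: insert or remove a message. -/
inductive BOp (M : Type) where
  | ins (m : M)
  | rem (m : M)

/-- Apply a single buffer operation. -/
def applyOp {M B : Type} (ins rem : M → B → Option B) : BOp M → B → Option B
  | .ins m, b => ins m b
  | .rem m, b => rem m b

/-- Apply a finite sequence of buffer operations, left to right. -/
def applySeq {M B : Type} (ins rem : M → B → Option B) : List (BOp M) → B → Option B
  | [], b => some b
  | op :: σ, b => (applyOp ins rem op b).bind (applySeq ins rem σ)

/-- The eight buffer axioms B1–B8 for a buffer structure with contents `B`,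
partial operations `ins`, `rem` and empty buffer `b0`. -/
structure BufferAxioms (M B : Type) (ins rem : M → B → Option B) (b0 : B) : Prop where
  b1 : ∀ (m : M) (b : B), (ins m b).isSome
  b2 : ∀ m : M, ((ins m b0).bind (rem m)).isSome
  b3 : ∀ m : M, rem m b0 = none
  b4 : ∀ (m m' : M) (b : B), (rem m b).isSome → ((ins m' b).bind (rem m)).isSome
  b5 : ∀ (m : M) (b : B) (σ : List (BOp M)), BOp.rem m ∉ σ →
        ((ins m b).bind (applySeq ins rem σ)).isSome → (applySeq ins rem σ b).isSome
  b6 : ∀ (m : M) (b : B), (rem m b).isSome →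
        (ins m b).bind (rem m) = (rem m b).bind (ins m)
  b7 : ∀ (m m' : M) (b : B), m ≠ m' →
        (ins m b).bind (rem m') = (rem m' b).bind (ins m)
  b8 : ∀ (m : M) (b : B) (σ : List (BOp M)), rem m b = none → BOp.rem m ∉ σ →
        (((ins m b).bind (applySeq ins rem σ)).bind (rem m)).isSome →
        ((ins m b).bind (applySeq ins rem σ)).bind (rem m) = applySeq ins rem σ b

/-- Asynchronous events: send events `p▷q!v` and receive events `p▷q?v`. -/
inductive Event (P V : Type) where
  | send (p q : P) (v : V)
  | recv (p q : P) (v : V)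
deriving DecidableEq

/-- The active participant of an event: the sender of a send, the receiver of a receive. -/
def Event.active {P V : Type} : Event P V → P
  | .send p _ _ => p
  | .recv _ q _ => q

/-- A network architecture: channels `C`, buffer contents `B`, a channel map,
partial insert/remove operations, and an empty buffer. -/
structure NetArch (P V C B : Type) where
  chan : P → P → C
  insert : P × P × V → B → Option B
  remove : P × P × V → B → Option B
  b0 : B

variable {P V C B : Type}

/-- Executing a single event on a channel state. -/
def NetArch.step [DecidableEq C] (N : NetArch P V C B) :
    Event P V → (C → B) → Option (C → B)
  | .send p q v, ξ => (N.insert (p, q, v) (ξ (N.chan p q))).map (Function.update ξ (N.chan p q))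
  | .recv p q v, ξ => (N.remove (p, q, v) (ξ (N.chan p q))).map (Function.update ξ (N.chan p q))

/-- Executing a finite word of events from a channel state. -/
def NetArch.runFrom [DecidableEq C] (N : NetArch P V C B) :
    List (Event P V) → (C → B) → Option (C → B)
  | [], ξ => some ξ
  | e :: w, ξ => (N.step e ξ).bind (N.runFrom w)

/-- The initial channel state: every channel holds the empty buffer. -/
def NetArch.init (N : NetArch P V C B) : C → B := fun _ => N.b0

/-- A finite word is channel-compliant if executing it from the initial channel
state is defined at every step. -/
def NetArch.compliant [DecidableEq C] (N : NetArch P V C B) (w : List (Event P V)) : Prop :=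
  (N.runFrom w N.init).isSome

/-- A finite word is channel-matched if it is channel-compliant and reaches the
initial (all-empty) channel state. -/
def NetArch.matched [DecidableEq C] (N : NetArch P V C B) (w : List (Event P V)) : Prop :=
  N.runFrom w N.init = some N.init

/-- Projection of a word onto the events in which participant `r` is active. -/
def proj [DecidableEq P] (r : P) (w : List (Event P V)) : List (Event P V) :=
  w.filter (fun e => decide (e.active = r))

/-- Equality under local projection. -/
def equivP [DecidableEq P] (w₁ w₂ : List (Event P V)) : Prop :=
  ∀ r : P, proj r w₁ = proj r w₂

/-- `split` replaces every synchronous message exchange `(p,q,v)` by the two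
consecutive asynchronous events `p▷q!v · p▷q?v`. -/
def split : List (P × P × V) → List (Event P V)
  | [] => []
  | m :: ρ => Event.send m.1 m.2.1 m.2.2 :: Event.recv m.1 m.2.1 m.2.2 :: split ρ

/-- The channel on which an event acts. -/
def NetArch.evChan (N : NetArch P V C B) : Event P V → C
  | .send p q _ => N.chan p q
  | .recv p q _ => N.chan p q

/-- The buffer operation an event performs on its channel. -/
def Event.op : Event P V → BOp (P × P × V)
  | .send p q v => .ins (p, q, v)
  | .recv p q v => .rem (p, q, v)

/-- The sequence of buffer operations that a word performs on the channel `c`. -/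
def NetArch.chanOps [DecidableEq C] (N : NetArch P V C B) (c : C) (w : List (Event P V)) :
    List (BOp (P × P × V)) :=
  (w.filter (fun e => decide (N.evChan e = c))).map Event.op

theorem NetArch.step_eq [DecidableEq C] (N : NetArch P V C B) (e : Event P V) (ξ : C → B) :
    N.step e ξ = (applyOp N.insert N.remove e.op (ξ (N.evChan e))).map
      (Function.update ξ (N.evChan e)) := by
  cases e <;> rfl

theorem NetArch.runFrom_append [DecidableEq C] (N : NetArch P V C B) (w u : List (Event P V))
    (ξ : C → B) : N.runFrom (w ++ u) ξ = (N.runFrom w ξ).bind (N.runFrom u) := by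
  induction w generalizing ξ with
  | nil => rfl
  | cons e w ih =>
    simp only [List.cons_append, NetArch.runFrom, Option.bind_assoc]
    exact congrArg _ (funext ih)

/-- Definedness of a run decomposes into definedness on each channel separately. -/
theorem NetArch.runFrom_isSome_iff [DecidableEq C] (N : NetArch P V C B) (w : List (Event P V))
    (ξ : C → B) : (N.runFrom w ξ).isSome ↔
      ∀ c, (applySeq N.insert N.remove (N.chanOps c w) (ξ c)).isSome := by
  induction w generalizing ξ with
  | nil => simp [NetArch.runFrom, NetArch.chanOps, applySeq]
  | cons e w ih =>
    have hself : N.chanOps (N.evChan e) (e :: w) = e.op :: N.chanOps (N.evChan e) w := by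
      simp [NetArch.chanOps]
    have hother : ∀ c, c ≠ N.evChan e → N.chanOps c (e :: w) = N.chanOps c w := by
      intro c hc
      simp [NetArch.chanOps, hc.symm]
    rw [NetArch.runFrom, NetArch.step_eq]
    cases hb : applyOp N.insert N.remove e.op (ξ (N.evChan e)) with
    | none =>
      refine iff_of_false (by simp) fun hall => ?_
      have := hall (N.evChan e)
      simp [hself, applySeq, hb] at this
    | some b =>
      simp only [Option.map_some, Option.bind_some, ih]
      refine forall_congr' fun c => ?_
      by_cases hc : c = N.evChan e
      · subst hc
        simp [hself, applySeq, hb]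
      · simp [hother c hc, hc]

theorem NetArch.rem_notMem_chanOps [DecidableEq C] (N : NetArch P V C B) {p q : P} {v : V}
    {u : List (Event P V)} (hu : Event.recv p q v ∉ u) (c : C) :
    BOp.rem (p, q, v) ∉ N.chanOps c u := by
  intro hmem
  obtain ⟨e, he, heq⟩ := List.mem_map.1 hmem
  have heu := List.mem_of_mem_filter he
  cases e with
  | send p' q' v' => cases heq
  | recv p' q' v' => cases heq; exact hu heu

/-- Unmatched-send elimination (axiom B5 lifted to words): if
`w₁ · (p▷q!v) · u` is channel-compliant and the event `p▷q?v` does not occur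
in `u`, then `w₁ · u` is channel-compliant. -/
theorem lifted_b5_elim_send {P V C B : Type} [DecidableEq C] (N : NetArch P V C B)
    (hN : BufferAxioms (P × P × V) B N.insert N.remove N.b0)
    (w₁ u : List (Event P V)) (p q : P) (hpq : p ≠ q) (v : V)
    (h : N.compliant (w₁ ++ Event.send p q v :: u))
    (hu : Event.recv p q v ∉ u) :
    N.compliant (w₁ ++ u) := by
  unfold NetArch.compliant at h ⊢
  rw [NetArch.runFrom_append] at h ⊢
  cases hξ : N.runFrom w₁ N.init with
  | none => simp [hξ] at h
  | some ξ =>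
    rw [hξ, Option.bind_some, NetArch.runFrom_isSome_iff] at h
    rw [Option.bind_some, NetArch.runFrom_isSome_iff]
    intro c
    have hc := h c
    by_cases hcc : N.chan p q = c
    · refine hN.b5 (p, q, v) (ξ c) _ (N.rem_notMem_chanOps hu c) ?_
      simpa [NetArch.chanOps, NetArch.evChan, hcc, applySeq, applyOp, Event.op] using hc
    · simpa [NetArch.chanOps, NetArch.evChan, hcc] using hc
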